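/- Let N = 4 and let ρ ∈ (0,1]. With the radial cutoff ψ and U_ε as in the context, there exist constants C > 0 and ε₀ ∈ (0,1) such that for all ε ∈ (0, ε₀), ∫_{ℝ⁴} U_ε(x)²·log(U_ε(x)²) dx ≤ 8·log( 8e·(ε² + 4ρ²) / (ε² + ρ²)² )·ω₄·ε²·log(1/ε) + C·ε², where ω₄ = 2π² is the surface area of the unit sphere in ℝ⁴, with the convention 0·log 0 = 0. -/

import Mathlib

open MeasureTheory

lemma aux_vol : (volume : Measure (EuclideanSpace ℝ (Fin 4))).real (Metric.ball 0 1) = Real.pi ^ 2 / 2 := by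
  rw [Measure.real, EuclideanSpace.volume_ball]
  have h3 : Real.Gamma (((Fintype.card (Fin 4) : ℕ) : ℝ) / 2 + 1) = 2 := by
    have h : (((Fintype.card (Fin 4) : ℕ) : ℝ) / 2 + 1) = ((2 : ℕ) : ℝ) + 1 := by
      simp; norm_num
    rw [h, Real.Gamma_nat_eq_factorial]; norm_num [Nat.factorial]
  have h4 : Real.sqrt Real.pi ^ Fintype.card (Fin 4) = Real.pi ^ 2 := by
    rw [Fintype.card_fin, show (4 : ℕ) = 2 * 2 from rfl, pow_mul, Real.sq_sqrt Real.pi_pos.le]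
  rw [h3, h4]
  simp only [ENNReal.ofReal_one, one_pow, one_mul]
  exact ENNReal.toReal_ofReal (by positivity)

/-- The explicit antiderivative. -/
lemma aux_deriv (ε r : ℝ) (hε : 0 < ε) :
    HasDerivAt (fun r : ℝ => 8 * ε ^ 2 * (Real.log (8 * ε ^ 2) / 2 *
        (Real.log (ε ^ 2 + r ^ 2) + ε ^ 2 / (ε ^ 2 + r ^ 2))
        - Real.log (ε ^ 2 + r ^ 2) ^ 2 / 2
        - ε ^ 2 * (Real.log (ε ^ 2 + r ^ 2) + 1) / (ε ^ 2 + r ^ 2)))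
      (r ^ 3 * (8 * ε ^ 2 / (ε ^ 2 + r ^ 2) ^ 2 *
        (Real.log (8 * ε ^ 2) - 2 * Real.log (ε ^ 2 + r ^ 2)))) r := by
  have ht : ε ^ 2 + r ^ 2 ≠ 0 := by positivity
  have h1 : HasDerivAt (fun r : ℝ => ε ^ 2 + r ^ 2) (2 * r) r := by
    simpa using (hasDerivAt_pow 2 r).const_add (ε ^ 2)
  have h2 := h1.log ht
  have h3 := (hasDerivAt_const r (ε ^ 2)).div h1 ht
  have h4 := ((h2.add_const 1).const_mul (ε ^ 2)).div h1 ht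
  have h5 := ((((h2.add h3).const_mul (Real.log (8 * ε ^ 2) / 2)).sub
    ((h2.pow 2).div_const 2)).sub h4).const_mul (8 * ε ^ 2)
  refine h5.congr_deriv ?_
  field_simp
  ring

lemma aux_inner (ε ρ : ℝ) (hε : 0 < ε) (hε1 : ε ≤ 1) (hρ : 0 < ρ) (hρ1 : ρ ≤ 1) :
    (∫ r in (0 : ℝ)..ρ, r ^ 3 * (8 * ε ^ 2 / (ε ^ 2 + r ^ 2) ^ 2 *
        (Real.log (8 * ε ^ 2) - 2 * Real.log (ε ^ 2 + r ^ 2)))) ≤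
      8 * ε ^ 2 * (Real.log (8 * Real.exp 1 * (ε ^ 2 + 4 * ρ ^ 2) / (ε ^ 2 + ρ ^ 2) ^ 2)
        * Real.log (1 / ε) + (Real.log 8 / 2 + 2 + |Real.log (ρ ^ 2)|)) := by
  have hT : 0 < ε ^ 2 + ρ ^ 2 := by positivity
  have hcont : Continuous (fun r : ℝ => r ^ 3 * (8 * ε ^ 2 / (ε ^ 2 + r ^ 2) ^ 2 *
        (Real.log (8 * ε ^ 2) - 2 * Real.log (ε ^ 2 + r ^ 2)))) := by
    have h0 : ∀ r : ℝ, ε ^ 2 + r ^ 2 ≠ 0 := fun r => by positivity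
    have h1 : Continuous (fun r : ℝ => Real.log (ε ^ 2 + r ^ 2)) :=
      Continuous.log (by fun_prop) h0
    have h2 : Continuous (fun r : ℝ => 8 * ε ^ 2 / (ε ^ 2 + r ^ 2) ^ 2) :=
      Continuous.div (by fun_prop) (by fun_prop) (fun r => pow_ne_zero 2 (h0 r))
    fun_prop
  rw [intervalIntegral.integral_eq_sub_of_hasDerivAt (fun r _ => aux_deriv ε r hε)
    (hcont.intervalIntegrable _ _)]
  rw [← mul_sub]
  refine mul_le_mul_of_nonneg_left ?_ (by positivity)
  have e1 : Real.log (8 * ε ^ 2) = Real.log 8 + 2 * Real.log ε := by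
    rw [Real.log_mul (by norm_num) (by positivity), Real.log_pow]; norm_num
  have e2 : Real.log (8 * Real.exp 1 * (ε ^ 2 + 4 * ρ ^ 2) / (ε ^ 2 + ρ ^ 2) ^ 2)
      = Real.log 8 + 1 + Real.log (ε ^ 2 + 4 * ρ ^ 2) - 2 * Real.log (ε ^ 2 + ρ ^ 2) := by
    rw [Real.log_div (by positivity) (by positivity), Real.log_mul (by positivity) (by positivity),
      Real.log_mul (by positivity) (by positivity), Real.log_exp, Real.log_pow]; norm_num
  have e3 : Real.log (ε ^ 2 + (0 : ℝ) ^ 2) = 2 * Real.log ε := by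
    rw [show ε ^ 2 + (0 : ℝ) ^ 2 = ε ^ 2 by ring, Real.log_pow]; norm_num
  have e4 : ε ^ 2 / (ε ^ 2 + (0 : ℝ) ^ 2) = 1 := by field_simp; ring
  have e5 : Real.log (1 / ε) = - Real.log ε := by simp
  rw [mul_div_right_comm (ε ^ 2), mul_div_right_comm (ε ^ 2), e4, e3, e2, e1, e5]
  have b1 : Real.log (ε ^ 2 + ρ ^ 2) ≤ Real.log (ε ^ 2 + 4 * ρ ^ 2) :=
    Real.log_le_log hT (by nlinarith)
  have b2 : Real.log (ε ^ 2 + ρ ^ 2) ≤ 1 := by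
    have := Real.log_le_sub_one_of_pos hT
    nlinarith
  have b3 : Real.log (ρ ^ 2) ≤ Real.log (ε ^ 2 + ρ ^ 2) :=
    Real.log_le_log (by positivity) (by nlinarith)
  have b4 : Real.log ε ≤ 0 := Real.log_nonpos hε.le hε1
  have b5 : 0 ≤ Real.log 8 := Real.log_nonneg (by norm_num)
  have q0 : 0 ≤ ε ^ 2 / (ε ^ 2 + ρ ^ 2) := by positivity
  have q1 : ε ^ 2 / (ε ^ 2 + ρ ^ 2) ≤ 1 := by
    rw [div_le_one hT]; nlinarith
  have b6 := neg_abs_le (Real.log (ρ ^ 2))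
  have b7 := abs_nonneg (Real.log (ρ ^ 2))
  generalize ε ^ 2 / (ε ^ 2 + ρ ^ 2) = q at *
  generalize |Real.log (ρ ^ 2)| = a at *
  generalize Real.log (ρ ^ 2) = a' at *
  generalize Real.log (ε ^ 2 + 4 * ρ ^ 2) = m at *
  generalize Real.log (ε ^ 2 + ρ ^ 2) = l at *
  generalize Real.log 8 = k at *
  generalize Real.log ε = L at *
  have p1 : 0 ≤ (-L) * (m - l + 2 + q) := mul_nonneg (by linarith) (by linarith)
  have p2 : 0 ≤ k * (1 - l) := mul_nonneg b5 (by linarith)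
  have p3 : 0 ≤ k * (1 - q) := mul_nonneg b5 (by linarith)
  have p4 : 0 ≤ q * (l + a) := mul_nonneg q0 (by linarith)
  have p5 : 0 ≤ (1 - q) * a := mul_nonneg (by linarith) b7
  nlinarith [sq_nonneg l]

/-- Upper bound of Lemma 3.4 (`N = 4`): with `U_ε(x) = ψ(|x|) u_ε(x)`,
`∫ U_ε² log U_ε² ≤ 8 log(8e(ε²+4ρ²)/(ε²+ρ²)²) ω₄ ε² log(1/ε) + O(ε²)`,
where `ω₄ = 2π²`. -/
theorem stmt_12 (ρ : ℝ) (hρ : ρ ∈ Set.Ioc (0 : ℝ) 1)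
    (ψ : ℝ → ℝ) (hψs : ContDiff ℝ (⊤ : ℕ∞) ψ)
    (hψ1 : ∀ r : ℝ, 0 ≤ r → r ≤ ρ → ψ r = 1)
    (hψ01 : ∀ r : ℝ, ρ ≤ r → r ≤ 2 * ρ → ψ r ∈ Set.Icc (0 : ℝ) 1)
    (hψ0 : ∀ r : ℝ, 2 * ρ ≤ r → ψ r = 0)
    (u : ℝ → EuclideanSpace ℝ (Fin 4) → ℝ)
    (hu : ∀ ε : ℝ, 0 < ε → ∀ x : EuclideanSpace ℝ (Fin 4),
      u ε x = Real.sqrt 8 * ε / (ε ^ 2 + ‖x‖ ^ 2)) :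
    ∃ C : ℝ, 0 < C ∧ ∃ ε₀ ∈ Set.Ioo (0 : ℝ) 1, ∀ ε ∈ Set.Ioo (0 : ℝ) ε₀,
      (∫ x : EuclideanSpace ℝ (Fin 4),
          (ψ ‖x‖ * u ε x) ^ 2 * Real.log ((ψ ‖x‖ * u ε x) ^ 2)) ≤
        8 * Real.log (8 * Real.exp 1 * (ε ^ 2 + 4 * ρ ^ 2) / (ε ^ 2 + ρ ^ 2) ^ 2) *
          (2 * Real.pi ^ 2) * ε ^ 2 * Real.log (1 / ε) + C * ε ^ 2 := by
  obtain ⟨hρ0, hρ1⟩ := hρ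
  have hlog8 : 0 ≤ Real.log 8 := Real.log_nonneg (by norm_num)
  refine ⟨2 * Real.pi ^ 2 * 8 * (Real.log 8 / 2 + 2 + |Real.log (ρ ^ 2)|), by positivity,
    ρ ^ 2 / 3, ⟨by positivity, by nlinarith⟩, ?_⟩
  rintro ε ⟨hε, hε2⟩
  have hε1 : ε ≤ 1 := by nlinarith
  set w : ℝ → ℝ := fun r => (ψ r * (Real.sqrt 8 * ε / (ε ^ 2 + r ^ 2))) ^ 2 with hw
  set g : ℝ → ℝ := fun r => w r * Real.log (w r) with hg
  have hwc : Continuous w := by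
    have h0 : ∀ r : ℝ, ε ^ 2 + r ^ 2 ≠ 0 := fun r => by positivity
    have hψc := hψs.continuous
    have h2 : Continuous (fun r : ℝ => Real.sqrt 8 * ε / (ε ^ 2 + r ^ 2)) :=
      Continuous.div (by fun_prop) (by fun_prop) h0
    exact (hψc.mul h2).pow 2
  have hgc : Continuous g := Real.continuous_mul_log.comp hwc
  have hI : (∫ x : EuclideanSpace ℝ (Fin 4),
      (ψ ‖x‖ * u ε x) ^ 2 * Real.log ((ψ ‖x‖ * u ε x) ^ 2)) =
      2 * Real.pi ^ 2 * ∫ r in Set.Ioi (0 : ℝ), r ^ 3 * g r := by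
    have h1 : ∀ x : EuclideanSpace ℝ (Fin 4),
        (ψ ‖x‖ * u ε x) ^ 2 * Real.log ((ψ ‖x‖ * u ε x) ^ 2) = g ‖x‖ := by
      intro x; rw [hu ε hε x]
    simp_rw [h1]
    rw [integral_fun_norm_addHaar volume g, aux_vol]
    simp only [finrank_euclideanSpace, Fintype.card_fin, nsmul_eq_mul, smul_eq_mul]
    norm_num
    ring
  have hgc3 : Continuous (fun r : ℝ => r ^ 3 * g r) := by fun_prop
  have hsupp : (∫ r in Set.Ioi (0 : ℝ), r ^ 3 * g r) = ∫ r in (0 : ℝ)..(2 * ρ), r ^ 3 * g r := by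
    rw [intervalIntegral.integral_of_le (by positivity)]
    apply setIntegral_eq_of_subset_of_forall_sdiff_eq_zero measurableSet_Ioi
    · exact Set.Ioc_subset_Ioi_self
    · rintro r ⟨hr, hr2⟩
      have : 2 * ρ ≤ r := by
        by_contra hc
        exact hr2 ⟨hr, (not_le.mp hc).le⟩
      simp [hg, hw, hψ0 r this]
  have hsplit : (∫ r in (0 : ℝ)..(2 * ρ), r ^ 3 * g r) =
      (∫ r in (0 : ℝ)..ρ, r ^ 3 * g r) + ∫ r in ρ..(2 * ρ), r ^ 3 * g r :=
    (intervalIntegral.integral_add_adjacent_intervals (hgc3.intervalIntegrable _ _)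
      (hgc3.intervalIntegrable _ _)).symm
  have s8 : Real.sqrt 8 ^ 2 = 8 := Real.sq_sqrt (by norm_num)
  have houter : (∫ r in ρ..(2 * ρ), r ^ 3 * g r) ≤ 0 := by
    have h : 0 ≤ ∫ r in ρ..(2 * ρ), - (r ^ 3 * g r) := by
      apply intervalIntegral.integral_nonneg (by linarith)
      rintro r ⟨hr1, hr2⟩
      have hr0 : 0 < r := by linarith
      obtain ⟨p0, p1⟩ := hψ01 r hr1 hr2
      have hs3 : Real.sqrt 8 ≤ 3 := by
        rw [Real.sqrt_le_left (by norm_num)]; norm_num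
      have hq1 : Real.sqrt 8 * ε / (ε ^ 2 + r ^ 2) ≤ 1 := by
        rw [div_le_one (by positivity)]
        nlinarith [mul_le_mul_of_nonneg_right hs3 hε.le, sq_nonneg ε]
      have hq0 : 0 ≤ Real.sqrt 8 * ε / (ε ^ 2 + r ^ 2) := by positivity
      have hw1 : w r ≤ 1 := pow_le_one₀ (mul_nonneg p0 hq0) (mul_le_one₀ p1 hq0 hq1)
      have hw0 : 0 ≤ w r := sq_nonneg _
      have : w r * Real.log (w r) ≤ 0 :=
        mul_nonpos_of_nonneg_of_nonpos hw0 (Real.log_nonpos hw0 hw1)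
      have h3 : 0 ≤ r ^ 3 := by positivity
      have := mul_nonpos_of_nonneg_of_nonpos h3 this
      simpa [hg] using this
    rw [intervalIntegral.integral_neg] at h
    linarith
  have hinner : (∫ r in (0 : ℝ)..ρ, r ^ 3 * g r) =
      ∫ r in (0 : ℝ)..ρ, r ^ 3 * (8 * ε ^ 2 / (ε ^ 2 + r ^ 2) ^ 2 *
        (Real.log (8 * ε ^ 2) - 2 * Real.log (ε ^ 2 + r ^ 2))) := by
    apply intervalIntegral.integral_congr
    intro r hr
    rw [Set.uIcc_of_le hρ0.le] at hr
    have hwr : w r = 8 * ε ^ 2 / (ε ^ 2 + r ^ 2) ^ 2 := by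
      simp only [hw]
      rw [hψ1 r hr.1 hr.2, one_mul, div_pow, mul_pow, s8]
    simp only [hg]
    rw [hwr, Real.log_div (by positivity) (by positivity), Real.log_pow]
    norm_num
  have hmain := aux_inner ε ρ hε hε1 hρ0 hρ1
  rw [← hinner] at hmain
  rw [hI, hsupp, hsplit]
  calc _ ≤ 2 * Real.pi ^ 2 * (8 * ε ^ 2 *
        (Real.log (8 * Real.exp 1 * (ε ^ 2 + 4 * ρ ^ 2) / (ε ^ 2 + ρ ^ 2) ^ 2)
        * Real.log (1 / ε) + (Real.log 8 / 2 + 2 + |Real.log (ρ ^ 2)|))) :=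
        mul_le_mul_of_nonneg_left (by linarith) (by positivity)
    _ = _ := by ring
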